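/- A₁₅ divides f₁₅(x₁) + f₁₅^σ(x₂) in K[x₁,x₂], and moreover A₁₅(x₂,x₁) = A₁₅^σ(x₁,x₂). -/

import Mathlib

/-!
The quotient of `f₁₅(x₁) + f₁₅^σ(x₂)` by `A₁₅` (a polynomial monic in `x₁`) can be computed by
long division in `x₁` over `ℚ[α, t, x₂]` modulo `α² - α + 4`; it is `B₁₅ / 15` with `B₁₅` below.
Since `K` is infinite, the identity `f₁₅(x₁) + f₁₅^σ(x₂) = A₁₅ * (B₁₅ / 15)` may be checked at
every point `(x, y)` of `K²`. There it is a polynomial identity modulo `α² - α + 4`: writing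
`A₁₅ = A₀ + α A₁` and `B₁₅ = b₀ + α b₁` with `α`-free parts, while `f₁₅` and `f₁₅^σ` are linear
in `α`, the required multiple of `α² - α + 4` is `A₁ b₁ / 15`.

Both sides of the swap identity are linear in `α`, and they agree coefficient by coefficient
once `σ α = 1 - α` is substituted, without using the equation of `α`.
-/

open Polynomial in
/-- The polynomial `f₁₅` of Cassou-Noguès and Couveignes (degree 15 family). -/
noncomputable def f₁₅ {K : Type*} [Field K] (α t : K) : Polynomial K :=
  C (1/15 : K) * X ^ 15
    + C ((α - 1) * t) * X ^ 13
    + C ((α + 7) * t) * X ^ 12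
    - C ((5*α + 21) * t^2) * X ^ 11
    + C ((74*α - 142) * t^2) * X ^ 10
    + C (-(1/3 : K)*(261*α - 349) * t^3 + (90*α + 240) * t^2) * X ^ 9
    - C ((649*α + 703) * t^3) * X ^ 8
    + C ((138*α + 717) * t^4 + (1380*α - 5760) * t^3) * X ^ 7
    + C (-(2192*α - 7756) * t^4 + (2500*α + 2800) * t^3) * X ^ 6
    + C ((1/5 : K)*(5835*α - 4743) * t^5 - (17790*α - 5400) * t^4) * X ^ 5
    + C ((9699*α + 6153) * t^5 + (300*α - 74400) * t^4) * X ^ 4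
    + C ((243*α - 3591) * t^6 + (4680*α + 92880) * t^5 + (21375*α + 4500) * t^4) * X ^ 3
    + C ((7254*α - 28062) * t^6 - (93600*α - 165600) * t^5) * X ^ 2
    + C (-(945*α + 675) * t^7 + (52920*α - 48600) * t^6 - (54000*α + 216000) * t^5) * X
    + C ((675*α - 5400) * t^7 - (10800*α - 86400) * t^6)

open MvPolynomial in
/-- The factor `A₁₅(x₁,x₂)` of `f₁₅(x₁) + f₁₅^σ(x₂)`. -/
noncomputable def A₁₅ {K : Type*} [Field K] (α t : K) : MvPolynomial (Fin 2) K :=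
  X 0 ^ 7 - C (α - 1) * X 0 ^ 6 * X 1 - C (2 : K) * X 0 ^ 5 * X 1 ^ 2
    + C ((7*α - 3) * t) * X 0 ^ 5 + C (α + 1) * X 0 ^ 4 * X 1 ^ 3
    + C (22 * t) * X 0 ^ 4 * X 1 + C ((5*α + 65) * t) * X 0 ^ 4
    - C (α - 2) * X 0 ^ 3 * X 1 ^ 4 - C ((10*α + 2) * t) * X 0 ^ 3 * X 1 ^ 2
    - C ((50*α - 70) * t) * X 0 ^ 3 * X 1 + C ((9*α - 69) * t^2) * X 0 ^ 3
    - C (2 : K) * X 0 ^ 2 * X 1 ^ 5 + C ((10*α - 12) * t) * X 0 ^ 2 * X 1 ^ 3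
    - C (90 * t) * X 0 ^ 2 * X 1 ^ 2 + C ((39*α + 33) * t^2) * X 0 ^ 2 * X 1
    + C ((210*α - 150) * t^2) * X 0 ^ 2 + C α * X 0 * X 1 ^ 6
    + C (22 * t) * X 0 * X 1 ^ 4 + C ((50*α + 20) * t) * X 0 * X 1 ^ 3
    - C ((39*α - 72) * t^2) * X 0 * X 1 ^ 2 + C (450 * t^2) * X 0 * X 1
    - C ((63*α + 45) * t^3 - (225*α + 900) * t^2) * X 0 + X 1 ^ 7
    - C ((7*α - 4) * t) * X 1 ^ 5 - C ((5*α - 70) * t) * X 1 ^ 4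
    - C ((9*α + 60) * t^2) * X 1 ^ 3 - C ((210*α - 60) * t^2) * X 1 ^ 2
    + C ((63*α - 108) * t^3 - (225*α - 1125) * t^2) * X 1 - C (675 * t^3)

open MvPolynomial in
/-- Fifteen times the quotient of `f₁₅(x₁) + f₁₅^σ(x₂)` by `A₁₅(x₁,x₂)`; the factor `15` clears
all denominators. It does not involve `σ`, since `σ α = 1 - α`. -/
noncomputable def B₁₅ {K : Type*} [Field K] (α t : K) : MvPolynomial (Fin 2) K :=
  X 0 ^ 8 + C (α - 1) * X 0 ^ 7 * X 1 - C (α + 1) * X 0 ^ 6 * X 1 ^ 2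
    + C ((8*α - 12) * t) * X 0 ^ 6 + C (2 : K) * X 0 ^ 5 * X 1 ^ 3
    - C ((9*α + 17) * t) * X 0 ^ 5 * X 1 + C ((10*α + 40) * t) * X 0 ^ 5 - X 0 ^ 4 * X 1 ^ 4
    - C ((2*α - 22) * t) * X 0 ^ 4 * X 1 ^ 2 + C ((25*α - 65) * t) * X 0 ^ 4 * X 1
    - C ((32*α + 58) * t^2) * X 0 ^ 4 + C (2 : K) * X 0 ^ 3 * X 1 ^ 5
    - C (6 * t) * X 0 ^ 3 * X 1 ^ 3 - C ((40*α - 50) * t) * X 0 ^ 3 * X 1 ^ 2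
    - C ((49*α - 81) * t^2) * X 0 ^ 3 * X 1 + C ((80*α - 640) * t^2) * X 0 ^ 3
    + C (α - 2) * X 0 ^ 2 * X 1 ^ 6 + C ((2*α + 20) * t) * X 0 ^ 2 * X 1 ^ 4
    + C ((40*α + 10) * t) * X 0 ^ 2 * X 1 ^ 3 + C (51 * t^2) * X 0 ^ 2 * X 1 ^ 2
    - C ((400*α - 350) * t^2) * X 0 ^ 2 * X 1
    - C ((120*α - 180) * t^3 - (225*α + 300) * t^2) * X 0 ^ 2 - C α * X 0 * X 1 ^ 7
    + C ((9*α - 26) * t) * X 0 * X 1 ^ 5 - C ((25*α + 40) * t) * X 0 * X 1 ^ 4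
    + C ((49*α + 32) * t^2) * X 0 * X 1 ^ 3 + C ((400*α - 50) * t^2) * X 0 * X 1 ^ 2
    + C (405 * t^3 - 600 * t^2) * X 0 * X 1 - C ((765*α - 1620) * t^3) * X 0 + X 1 ^ 8
    - C ((8*α + 4) * t) * X 1 ^ 6 - C ((10*α - 50) * t) * X 1 ^ 5
    + C ((32*α - 90) * t^2) * X 1 ^ 4 - C ((80*α + 560) * t^2) * X 1 ^ 3
    + C ((120*α + 60) * t^3 - (225*α - 525) * t^2) * X 1 ^ 2 + C ((765*α + 855) * t^3) * X 1
    + C (225 * t^4 - 3600 * t^3)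

/-- `A₁₅` divides `f₁₅(x₁) + f₁₅^σ(x₂)` in `K[x₁,x₂]`, and moreover
`A₁₅(x₂,x₁) = A₁₅^σ(x₁,x₂)`. -/
theorem A₁₅_dvd_and_swap
    {K : Type*} [Field K] [CharZero K] (α t : K) (σ : K →+* K)
    (hα : α^2 - α + 4 = 0) (hσ : σ α = 1 - α) (ht : σ t = t) :
    (A₁₅ α t ∣
        Polynomial.aeval (MvPolynomial.X 0 : MvPolynomial (Fin 2) K) (f₁₅ α t)
          + Polynomial.aeval (MvPolynomial.X 1 : MvPolynomial (Fin 2) K) ((f₁₅ α t).map σ))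
      ∧ MvPolynomial.rename (Equiv.swap (0 : Fin 2) 1) (A₁₅ α t)
          = MvPolynomial.map σ (A₁₅ α t) := by
  have hinf : Infinite K := CharZero.infinite K
  constructor
  · refine ⟨MvPolynomial.C (1/15 : K) * B₁₅ α t, MvPolynomial.funext fun v => ?_⟩
    simp only [A₁₅, B₁₅, f₁₅, Polynomial.map_add, Polynomial.map_sub, Polynomial.map_mul,
      Polynomial.map_pow, Polynomial.map_neg, Polynomial.map_one, Polynomial.map_ofNat,
      Polynomial.map_C, Polynomial.map_X, map_add, map_sub, map_mul, map_neg,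
      map_pow, map_div₀, map_one, map_ofNat, hσ, ht, Polynomial.aeval_C, Polynomial.aeval_X,
      MvPolynomial.algebraMap_eq, MvPolynomial.eval_C, MvPolynomial.eval_X]
    generalize v 0 = x
    generalize v 1 = y
    -- The two factors are the coefficients of `α` in `A₁₅` and in `B₁₅`.
    linear_combination (-1/15) * (
        -x ^ 6 * y + 7 * t * x ^ 5 + x ^ 4 * y ^ 3 + 5 * t * x ^ 4 - x ^ 3 * y ^ 4
          - 10 * t * x ^ 3 * y ^ 2 - 50 * t * x ^ 3 * y + 9 * t^2 * x ^ 3 + 10 * t * x ^ 2 * y ^ 3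
          + 39 * t^2 * x ^ 2 * y + 210 * t^2 * x ^ 2 + x * y ^ 6 + 50 * t * x * y ^ 3
          - 39 * t^2 * x * y ^ 2 - (63 * t^3 - 225 * t^2) * x - 7 * t * y ^ 5 - 5 * t * y ^ 4
          - 9 * t^2 * y ^ 3 - 210 * t^2 * y ^ 2 + (63 * t^3 - 225 * t^2) * y) * (
        x ^ 7 * y - x ^ 6 * y ^ 2 + 8 * t * x ^ 6 - 9 * t * x ^ 5 * y + 10 * t * x ^ 5
          - 2 * t * x ^ 4 * y ^ 2 + 25 * t * x ^ 4 * y - 32 * t^2 * x ^ 4 - 40 * t * x ^ 3 * y ^ 2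
          - 49 * t^2 * x ^ 3 * y + 80 * t^2 * x ^ 3 + x ^ 2 * y ^ 6 + 2 * t * x ^ 2 * y ^ 4
          + 40 * t * x ^ 2 * y ^ 3 - 400 * t^2 * x ^ 2 * y - (120 * t^3 - 225 * t^2) * x ^ 2
          - x * y ^ 7 + 9 * t * x * y ^ 5 - 25 * t * x * y ^ 4 + 49 * t^2 * x * y ^ 3
          + 400 * t^2 * x * y ^ 2 - 765 * t^3 * x - 8 * t * y ^ 6 - 10 * t * y ^ 5
          + 32 * t^2 * y ^ 4
          - 80 * t^2 * y ^ 3 + (120 * t^3 - 225 * t^2) * y ^ 2 + 765 * t^3 * y) * hα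
  · simp only [A₁₅, map_add, map_sub, map_mul, map_pow, map_one, map_ofNat, hσ, ht,
      MvPolynomial.map_C, MvPolynomial.map_X, MvPolynomial.rename_C, MvPolynomial.rename_X,
      Equiv.swap_apply_left, Equiv.swap_apply_right]
    ring
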